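/- arXiv:1003.2128 — 6 statements merged into one kernel-verified Lean document; each statement's English description precedes it below -/
import Mathlib

section
/- Let D be an invertible diagonal N×N matrix over a field F, θ ∈ F nonzero, and A an N×N matrix with A·A = 1 and A·D·A = θ·D⁻¹·A·D⁻¹. Then (D·A)³ = θ·1 and (A·D)³ = θ·1, where 1 is the identity matrix. (In particular both sides of the braid-form Yang–Baxter equation (D·A)³ = (A·D)³ equal the same multiple of the identity operator.) -/
/-- If `D` is an invertible diagonal matrix, `θ ≠ 0`, and `A` satisfies `A·A = 1` and
`A·D·A = θ·D⁻¹·A·D⁻¹`, then `(D·A)³ = θ·1` and `(A·D)³ = θ·1`. -/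
theorem stmt0 {F : Type*} [Field F] {N : ℕ} (hN : 1 ≤ N)
    (D A : Matrix (Fin N) (Fin N) F) (θ : F)
    (hDdiag : D.IsDiag) (hDinv : IsUnit D.det) (hθ : θ ≠ 0)
    (hA : A * A = 1)
    (hADA : A * D * A = θ • (D⁻¹ * A * D⁻¹)) :
    (D * A) ^ 3 = θ • (1 : Matrix (Fin N) (Fin N) F) ∧
    (A * D) ^ 3 = θ • (1 : Matrix (Fin N) (Fin N) F) := by
  have h₁ : D * D⁻¹ = 1 := Matrix.mul_nonsing_inv D hDinv
  have h₂ : D⁻¹ * D = 1 := Matrix.nonsing_inv_mul D hDinv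
  -- In each cube, regroup around one factor `A * D * A`; after `hADA` everything cancels.
  constructor
  · calc (D * A) ^ 3 = D * (A * D * A) * D * A := by noncomm_ring
      _ = θ • ((D * D⁻¹) * A * (D⁻¹ * D) * A) := by
        rw [hADA]; simp only [Matrix.mul_smul, Matrix.smul_mul, Matrix.mul_assoc]
      _ = θ • 1 := by rw [h₁, h₂, one_mul, mul_one, hA]
  · calc (A * D) ^ 3 = (A * D * A) * D * A * D := by noncomm_ring
      _ = θ • (D⁻¹ * (A * (D⁻¹ * D) * A) * D) := by
        rw [hADA]; simp only [Matrix.smul_mul, Matrix.mul_assoc]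
      _ = θ • 1 := by rw [h₂, mul_one, hA, mul_one, h₂]
end

section
/- Let D be an invertible diagonal N×N matrix over a field F, θ ∈ F nonzero, and A an N×N matrix with A·A = 1 and A·D·A = θ·D⁻¹·A·D⁻¹. Then D·(A·D·A)·D = (A·D·A)·D·(A·D·A) = θ·A. In particular, the matrices R₁ = D and R₂ = A·D·A satisfy the braid relation R₁·R₂·R₁ = R₂·R₁·R₂. -/
/-- If `D` is an invertible diagonal matrix, `θ ≠ 0`, and `A` satisfies `A·A = 1` and
`A·D·A = θ·D⁻¹·A·D⁻¹`, then `D·(A·D·A)·D = (A·D·A)·D·(A·D·A) = θ·A`; in particular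
`R₁ = D` and `R₂ = A·D·A` satisfy the braid relation `R₁·R₂·R₁ = R₂·R₁·R₂`. -/
theorem stmt1 {F : Type*} [Field F] {N : ℕ} (hN : 1 ≤ N)
    (D A : Matrix (Fin N) (Fin N) F) (θ : F)
    (hDdiag : D.IsDiag) (hDinv : IsUnit D.det) (hθ : θ ≠ 0)
    (hA : A * A = 1)
    (hADA : A * D * A = θ • (D⁻¹ * A * D⁻¹)) :
    D * (A * D * A) * D = θ • A ∧
    (A * D * A) * D * (A * D * A) = θ • A ∧
    D * (A * D * A) * D = (A * D * A) * D * (A * D * A) := by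
  -- Multiplying the hypothesis by `D` on both sides cancels both inverses.
  have h1 : D * (A * D * A) * D = θ • A := by
    rw [hADA, Matrix.mul_smul, Matrix.smul_mul, ← Matrix.mul_assoc, ← Matrix.mul_assoc,
      Matrix.mul_nonsing_inv D hDinv, Matrix.one_mul, Matrix.mul_assoc,
      Matrix.nonsing_inv_mul D hDinv, Matrix.mul_one]
  -- The other product is `D * (A * D * A) * D` conjugated by the involution `A`, which fixes `θ • A`.
  have h2 : (A * D * A) * D * (A * D * A) = θ • A := by
    calc (A * D * A) * D * (A * D * A) = A * (D * (A * D * A) * D) * A := by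
          simp only [Matrix.mul_assoc]
      _ = θ • A := by
          rw [h1, Matrix.mul_smul, Matrix.smul_mul, hA, Matrix.one_mul]
  exact ⟨h1, h2, h1.trans h2.symm⟩
end

section
/- Let D be an invertible diagonal N×N matrix over a field F, θ ∈ F nonzero, and A an N×N matrix with A·A = 1 and A·D·A = θ·D⁻¹·A·D⁻¹. Then (D·(A·D·A))³ = θ²·1 and ((A·D·A)·D)³ = θ²·1, where 1 is the identity matrix. -/
/-!
Cancelling `D` against `D⁻¹`, the relation turns the two products into `θ • (A * D⁻¹)` and
`θ • (D⁻¹ * A)`. Their cubes each contain the block `D⁻¹ * A * D⁻¹`, which one factor `θ` turns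
back into `A * D * A`; then everything cancels by `A * A = 1` and `D * D⁻¹ = 1`, leaving `θ ^ 2`.
-/

/-- If `D` is an invertible diagonal matrix, `θ ≠ 0`, and `A` satisfies `A·A = 1` and
`A·D·A = θ·D⁻¹·A·D⁻¹`, then `(D·(A·D·A))³ = θ²·1` and `((A·D·A)·D)³ = θ²·1`. -/
theorem stmt2 {F : Type*} [Field F] {N : ℕ} (hN : 1 ≤ N)
    (D A : Matrix (Fin N) (Fin N) F) (θ : F)
    (hDdiag : D.IsDiag) (hDinv : IsUnit D.det) (hθ : θ ≠ 0)
    (hA : A * A = 1)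
    (hADA : A * D * A = θ • (D⁻¹ * A * D⁻¹)) :
    (D * (A * D * A)) ^ 3 = θ ^ 2 • (1 : Matrix (Fin N) (Fin N) F) ∧
    ((A * D * A) * D) ^ 3 = θ ^ 2 • (1 : Matrix (Fin N) (Fin N) F) := by
  have hDE : D * D⁻¹ = 1 := Matrix.mul_nonsing_inv D hDinv
  have hED : D⁻¹ * D = 1 := Matrix.nonsing_inv_mul D hDinv
  have hAA : ∀ X, A * (A * X) = X := fun X => by rw [← mul_assoc, hA, one_mul]
  have h₁ : D * (A * D * A) = θ • (A * D⁻¹) := by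
    rw [hADA, mul_smul_comm, ← mul_assoc, ← mul_assoc, hDE, one_mul]
  have h₂ : A * D * A * D = θ • (D⁻¹ * A) := by
    rw [hADA, smul_mul_assoc, mul_assoc, hED, mul_one]
  constructor
  · calc (D * (A * D * A)) ^ 3 = θ ^ 2 • (A * (θ • (D⁻¹ * A * D⁻¹)) * A * D⁻¹) := by
          rw [h₁, smul_pow]
          simp only [pow_succ, pow_zero, one_mul, mul_smul_comm, smul_mul_assoc, smul_smul,
            mul_assoc]
      _ = θ ^ 2 • 1 := by
          rw [← hADA]
          simp only [mul_assoc, hAA, hDE]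
  · calc (A * D * A * D) ^ 3 = θ ^ 2 • (D⁻¹ * A * (θ • (D⁻¹ * A * D⁻¹)) * A) := by
          rw [h₂, smul_pow]
          simp only [pow_succ, pow_zero, one_mul, mul_smul_comm, smul_mul_assoc, smul_smul,
            mul_assoc]
      _ = θ ^ 2 • 1 := by
          rw [← hADA]
          simp only [mul_assoc, hAA, hA, mul_one, hED]
end

section
/- Let q > 0 be real with q ≠ 1 and let s be a positive half-integer. Take n = 1, set a₁ = −(q^{2s} + q^{−2s})⁻¹, and let a₀ be an arbitrary real number (in the paper a₀² = 1 − a₁²). Define the 2×2 matrices G, H, J with entries G_{kk'} = δ_{k1}δ_{k'1} − a_k a_{k'}, H_{kk'} = θ₁⁻¹ ξ₁ (δ_{k1} ξ_{k'} a_{k'} + δ_{k'1} ξ_k a_k) − (ξ_k⁻¹ + ξ_{k'}⁻¹) a_k a_{k'}, J_{kk'} = (ξ_k ξ_{k'} − θ₁² ξ₁⁻² ξ_k⁻¹ ξ_{k'}⁻¹) a_k a_{k'} for k, k' ∈ {0,1}. Then J = (θ₁² ξ₀⁻² ξ₁⁻² − ξ₀²)·G = (q^{4s(s−1)} − q^{4s²})·G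 and H = 2 ξ₀⁻¹·G = 2 q^{−2s²}·G. (Part (i) of Lemma 3.) -/
/-!
Put `x = q ^ (2 * s ^ 2)` and `y = q ^ (2 * s)`. Then `ξ₀ = x`, `ξ₁ = -x / y ^ 2`,
`θ₁ = -x ^ 3 / y ^ 3` and `a₁ = -y / (y ^ 2 + 1)`, so every matrix entry is a rational function
of `x`, `y` (and polynomial in `a₀`), with denominators powers of `x`, `y` and `y ^ 2 + 1`, all
nonzero since `q > 0`. The identities hold entrywise as identities of rational functions; the
only entries that use the value of `a₁` are the `(1, 1)` entry of `J`, through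
`1 - a₁ ^ 2 = (y ^ 4 + y ^ 2 + 1) / (y ^ 2 + 1) ^ 2`, and the off-diagonal and `(1, 1)` entries
of `H`, through `(y ^ 2 + 1) * a₁ = -y`.
-/

noncomputable def ρ (t : ℝ) : ℝ := t * (t + 1)

/-- `ξ_k = (−1)^k q^{ρ(2s−k) − 2ρ(s)}` (real powers of `q`). -/
noncomputable def ξ (q s : ℝ) (k : ℕ) : ℝ := (-1 : ℝ) ^ k * q ^ (ρ (2 * s - k) - 2 * ρ s)

/-- `θ_n = (−1)^n q^{ρ(3s−n) − 3ρ(s)}` (real powers of `q`). -/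
noncomputable def θq (q s : ℝ) (n : ℕ) : ℝ := (-1 : ℝ) ^ n * q ^ (ρ (3 * s - n) - 3 * ρ s)

lemma ξ_zero_eq (q s : ℝ) : ξ q s 0 = q ^ (2 * s ^ 2) := by
  simp only [ξ, ρ, pow_zero, one_mul, Nat.cast_zero]
  congr 1
  ring

lemma ξ_one_eq (q s : ℝ) (hq : 0 < q) :
    ξ q s 1 = -(q ^ (2 * s ^ 2) / (q ^ (2 * s)) ^ 2) := by
  rw [← Real.rpow_mul_natCast hq.le, ← Real.rpow_sub hq]
  simp only [ξ, ρ, pow_one, neg_one_mul, Nat.cast_one]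
  congr 2
  push_cast
  ring

lemma θq_one_eq (q s : ℝ) (hq : 0 < q) :
    θq q s 1 = -((q ^ (2 * s ^ 2)) ^ 3 / (q ^ (2 * s)) ^ 3) := by
  rw [← Real.rpow_mul_natCast hq.le, ← Real.rpow_mul_natCast hq.le, ← Real.rpow_sub hq]
  simp only [θq, ρ, pow_one, neg_one_mul, Nat.cast_one]
  congr 2
  push_cast
  ring

/-- Part (i) of Lemma 3: for `n = 1`, with `a₁ = −(q^{2s}+q^{−2s})⁻¹` and `a₀` arbitrary,
the 2×2 matrices satisfy `J = (θ₁²ξ₀⁻²ξ₁⁻² − ξ₀²)·G = (q^{4s(s−1)} − q^{4s²})·G` and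
`H = 2ξ₀⁻¹·G = 2q^{−2s²}·G`. -/
theorem stmt11 (q s : ℝ) (hq : 0 < q) (hq1 : q ≠ 1)
    (hs : ∃ m : ℕ, 0 < m ∧ (m : ℝ) = 2 * s)
    (a₀ : ℝ) :
    let a : Fin 2 → ℝ := ![a₀, -(q ^ (2 * s) + q ^ (-(2 * s)))⁻¹]
    let G : Matrix (Fin 2) (Fin 2) ℝ := Matrix.of fun k k' =>
      (if k = 1 then (1 : ℝ) else 0) * (if k' = 1 then (1 : ℝ) else 0) - a k * a k'
    let H : Matrix (Fin 2) (Fin 2) ℝ := Matrix.of fun k k' =>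
      (θq q s 1)⁻¹ * ξ q s 1 *
        ((if k = 1 then (1 : ℝ) else 0) * ξ q s k' * a k' +
         (if k' = 1 then (1 : ℝ) else 0) * ξ q s k * a k) -
      ((ξ q s k)⁻¹ + (ξ q s k')⁻¹) * a k * a k'
    let J : Matrix (Fin 2) (Fin 2) ℝ := Matrix.of fun k k' =>
      (ξ q s k * ξ q s k' -
        θq q s 1 ^ 2 * (ξ q s 1)⁻¹ ^ 2 * (ξ q s k)⁻¹ * (ξ q s k')⁻¹) * a k * a k'
    J = (θq q s 1 ^ 2 * (ξ q s 0)⁻¹ ^ 2 * (ξ q s 1)⁻¹ ^ 2 - ξ q s 0 ^ 2) • G ∧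
    J = (q ^ (4 * s * (s - 1)) - q ^ (4 * s ^ 2)) • G ∧
    H = (2 * (ξ q s 0)⁻¹) • G ∧
    H = (2 * q ^ (-(2 * s ^ 2))) • G := by
  have e1 : q ^ (4 * s * (s - 1)) = (q ^ (2 * s ^ 2)) ^ 2 / (q ^ (2 * s)) ^ 2 := by
    rw [← Real.rpow_mul_natCast hq.le, ← Real.rpow_mul_natCast hq.le, ← Real.rpow_sub hq]
    congr 1
    push_cast
    ring
  have e2 : q ^ (4 * s ^ 2) = (q ^ (2 * s ^ 2)) ^ 2 := by
    rw [← Real.rpow_mul_natCast hq.le]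
    congr 1
    push_cast
    ring
  intro a G H J
  have hx : 0 < q ^ (2 * s ^ 2) := Real.rpow_pos_of_pos hq _
  have hy : 0 < q ^ (2 * s) := Real.rpow_pos_of_pos hq _
  have h0 := ξ_zero_eq q s
  have h1 := ξ_one_eq q s hq
  have ht := θq_one_eq q s hq
  have ha : a = ![a₀, -(q ^ (2 * s) / ((q ^ (2 * s)) ^ 2 + 1))] := by
    simp only [a, Real.rpow_neg hq.le]
    congr 3
    field_simp
  rw [e1, e2, Real.rpow_neg hq.le]
  simp only [G, H, J, ha, ht, h0, h1]
  generalize q ^ (2 * s ^ 2) = x at *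
  generalize q ^ (2 * s) = y at *
  have hy1 : y ^ 2 + 1 ≠ 0 := by positivity
  -- The two scalars multiplying `G` in the first two claims agree, and so do those in the last two.
  refine ⟨?_, ?_, ?_, ?_⟩ <;> ext i j <;> fin_cases i <;> fin_cases j <;>
    simp [h0, h1] <;> field_simp <;> ring
end

section
/- Let q > 0 be real with q ≠ 1, let s be a half-integer with 2s ≥ 2, take n = 2, and let a₀, a₁, a₂ be real numbers with a₀ ≠ 0 and a₁ ≠ 0. Define the 3×3 matrices G and J with entries G_{kk'} = δ_{k2}δ_{k'2} − a_k a_{k'} and J_{kk'} = (ξ_k ξ_{k'} − θ₂² ξ₂⁻² ξ_k⁻¹ ξ_{k'}⁻¹) a_k a_{k'} for k, k' ∈ {0,1,2}. Then G and J are linearly independent over ℝ. (Part of Lemma 3(ii).) -/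
lemma xi_sq_pos {q : ℝ} (s : ℝ) (hq : 0 < q) (k : ℕ) : 0 < ξ q s k ^ 2 := by
  have h : ξ q s k ≠ 0 := by
    unfold ξ
    exact mul_ne_zero (pow_ne_zero _ (by norm_num)) (Real.rpow_pos_of_pos hq _).ne'
  positivity

lemma xi_zero_sq_ne_xi_one_sq {q s : ℝ} (hq : 0 < q) (hq1 : q ≠ 1) (hs : s ≠ 0) :
    ξ q s 0 ^ 2 ≠ ξ q s 1 ^ 2 := by
  intro h
  simp only [ξ, mul_pow, pow_zero, pow_one, neg_one_sq, one_pow, one_mul] at h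
  have h1 := (pow_left_inj₀ (Real.rpow_pos_of_pos hq _).le
    (Real.rpow_pos_of_pos hq _).le two_ne_zero).mp h
  have h2 := (Real.rpow_right_inj hq hq1).mp h1
  simp only [ρ, Nat.cast_zero, Nat.cast_one] at h2
  apply hs
  linarith

/-- The function `x ↦ x - c / x` is injective on the positive reals when `c ≥ 0`. -/
lemma eq_of_sub_mul_inv_eq {c x y : ℝ} (hc : 0 ≤ c) (hx : 0 < x) (hy : 0 < y)
    (h : x - c * x⁻¹ = y - c * y⁻¹) : x = y := by
  have h1 : (x - y) * (x * y + c) = 0 := by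
    field_simp at h
    linear_combination h
  rcases mul_eq_zero.mp h1 with h2 | h2
  · linarith
  · have := mul_pos hx hy
    linarith

/-- Part of Lemma 3(ii): for `n = 2`, the 3×3 matrices `G` and `J` are linearly
independent over `ℝ`. -/
theorem stmt13 (q s : ℝ) (hq : 0 < q) (hq1 : q ≠ 1)
    (hs : ∃ m : ℕ, 0 < m ∧ (m : ℝ) = 2 * s) (hs2 : 2 ≤ 2 * s)
    (a : Fin 3 → ℝ) (ha0 : a 0 ≠ 0) (ha1 : a 1 ≠ 0) :
    let G : Matrix (Fin 3) (Fin 3) ℝ := Matrix.of fun k k' =>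
      (if k = 2 then (1 : ℝ) else 0) * (if k' = 2 then (1 : ℝ) else 0) - a k * a k'
    let J : Matrix (Fin 3) (Fin 3) ℝ := Matrix.of fun k k' =>
      (ξ q s k * ξ q s k' -
        θq q s 2 ^ 2 * (ξ q s 2)⁻¹ ^ 2 * (ξ q s k)⁻¹ * (ξ q s k')⁻¹) * a k * a k'
    LinearIndependent ℝ ![G, J] := by
  intro G J
  rw [LinearIndependent.pair_iff]
  intro α β h
  set c : ℝ := θq q s 2 ^ 2 * (ξ q s 2)⁻¹ ^ 2
  have h0 : α = β * (ξ q s 0 ^ 2 - c * (ξ q s 0 ^ 2)⁻¹) := by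
    have e := congrFun (congrFun h 0) 0
    simp [G, J] at e
    apply mul_right_cancel₀ (pow_ne_zero 2 ha0)
    rw [← inv_pow]
    linear_combination -e
  have h1 : α = β * (ξ q s 1 ^ 2 - c * (ξ q s 1 ^ 2)⁻¹) := by
    have e := congrFun (congrFun h 1) 1
    simp [G, J] at e
    apply mul_right_cancel₀ (pow_ne_zero 2 ha1)
    rw [← inv_pow]
    linear_combination -e
  have hβ : β = 0 := by
    by_contra hβ
    exact xi_zero_sq_ne_xi_one_sq hq hq1 (by linarith)
      (eq_of_sub_mul_inv_eq (by positivity) (xi_sq_pos s hq 0) (xi_sq_pos s hq 1)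
        (mul_left_cancel₀ hβ (h0.symm.trans h1)))
  exact ⟨by rw [h0, hβ, zero_mul], hβ⟩
end

section
/- Let q > 0 be real with q ≠ 1, let s be a positive half-integer, let n be an integer with 3 ≤ n ≤ 2s, and let a₀,…,a_n be real numbers with a₀ ≠ 0 and a₁ ≠ 0. Define the (n+1)×(n+1) matrices G, H, J with entries G_{kk'} = δ_{kn}δ_{k'n} − a_k a_{k'}, H_{kk'} = θ_n⁻¹ ξ_n (δ_{kn} ξ_{k'} a_{k'} + δ_{k'n} ξ_k a_k) − (ξ_k⁻¹ + ξ_{k'}⁻¹) a_k a_{k'}, J_{kk'} = (ξ_k ξ_{k'} − θ_n² ξ_n⁻² ξ_k⁻¹ ξ_{k'}⁻¹) a_k a_{k'} for 0 ≤ k, k' ≤ n. Then G, H, J are linearly independent over ℝ. (Part (iii) of Lemma 3.) -/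
lemma xi_ne_zero (q s : ℝ) (hq : 0 < q) (k : ℕ) : ξ q s k ≠ 0 := by
  unfold ξ
  have := Real.rpow_pos_of_pos hq (ρ (2 * s - k) - 2 * ρ s)
  positivity

lemma xi_zero_ne_xi_one (q s : ℝ) (hq : 0 < q) : ξ q s 0 ≠ ξ q s 1 := by
  have h0 := Real.rpow_pos_of_pos hq (ρ (2 * s - (0 : ℕ)) - 2 * ρ s)
  have h1 := Real.rpow_pos_of_pos hq (ρ (2 * s - (1 : ℕ)) - 2 * ρ s)
  unfold ξ
  rw [pow_zero, pow_one]
  linarith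

/-- The nondegeneracy `θ_n² ξ_n⁻² ≠ (ξ₀ ξ₁)²`: in absolute value, `θ_n / ξ_n` is
`q ^ (4s² - 2ns)` while `ξ₀ ξ₁` is `q ^ (4s² - 4s)`. -/
lemma theta_sq_ne (q s : ℝ) (hq : 0 < q) (hq1 : q ≠ 1) (hs : s ≠ 0) (n : ℕ) (hn : n ≠ 2) :
    θq q s n ^ 2 * (ξ q s n)⁻¹ ^ 2 ≠ (ξ q s 0 * ξ q s 1) ^ 2 := by
  intro h
  have hx := xi_ne_zero q s hq n
  have h2 : θq q s n ^ 2 = (ξ q s 0 * ξ q s 1 * ξ q s n) ^ 2 := by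
    rw [mul_pow _ (ξ q s n), ← h]
    field_simp
  have h3 := sq_eq_sq_iff_abs_eq_abs _ _ |>.mp h2
  simp only [θq, ξ, abs_mul, abs_pow, abs_neg, abs_one, one_pow, one_mul,
    abs_of_pos (Real.rpow_pos_of_pos hq _)] at h3
  rw [← Real.rpow_add hq, ← Real.rpow_add hq, Real.rpow_right_inj hq hq1] at h3
  simp only [ρ] at h3
  push_cast at h3
  have h4 : s * ((n : ℝ) - 2) = 0 := by linarith
  rcases mul_eq_zero.mp h4 with h5 | h5
  · exact hs h5
  · exact hn (by exact_mod_cast sub_eq_zero.mp h5)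

/-- The scalar linear system coming from the entries `(0,0)`, `(0,1)`, `(1,1)` has only the
trivial solution. -/
lemma coeffs_eq_zero (x y c α β γ : ℝ) (hx : x ≠ 0) (hy : y ≠ 0) (hxy : x ≠ y)
    (hc : c ≠ (x * y) ^ 2)
    (h00 : -α - β * (x⁻¹ + x⁻¹) + γ * (x * x - c * x⁻¹ * x⁻¹) = 0)
    (h01 : -α - β * (x⁻¹ + y⁻¹) + γ * (x * y - c * x⁻¹ * y⁻¹) = 0)
    (h11 : -α - β * (y⁻¹ + y⁻¹) + γ * (y * y - c * y⁻¹ * y⁻¹) = 0) :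
    α = 0 ∧ β = 0 ∧ γ = 0 := by
  have hsub : x - y ≠ 0 := sub_ne_zero.mpr hxy
  have hγ : γ = 0 := by
    have e : γ * ((x - y) ^ 2 - c * (x⁻¹ - y⁻¹) ^ 2) = 0 := by
      linear_combination h00 - 2 * h01 + h11
    have e2 : γ * ((x - y) ^ 2 * ((x * y) ^ 2 - c)) = 0 := by
      field_simp at e
      linear_combination e
    rcases mul_eq_zero.mp e2 with h | h
    · exact h
    · exact absurd h (mul_ne_zero (pow_ne_zero 2 hsub) (sub_ne_zero.mpr hc.symm))
  subst hγ
  have hβ : β = 0 := by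
    have e : β * (x⁻¹ - y⁻¹) = 0 := by linear_combination h01 - h00
    rcases mul_eq_zero.mp e with h | h
    · exact h
    · exact absurd (inv_injective (sub_eq_zero.mp h)) hxy
  subst hβ
  exact ⟨by linarith, rfl, rfl⟩

/-- Part (iii) of Lemma 3: for `3 ≤ n ≤ 2s`, the matrices `G`, `H`, `J` are linearly
independent over `ℝ`. -/
theorem stmt14 (q s : ℝ) (hq : 0 < q) (hq1 : q ≠ 1)
    (hs : ∃ m : ℕ, 0 < m ∧ (m : ℝ) = 2 * s)
    (n : ℕ) (hn3 : 3 ≤ n) (hn2s : (n : ℝ) ≤ 2 * s)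
    (a : Fin (n + 1) → ℝ) (ha0 : a 0 ≠ 0) (ha1 : a 1 ≠ 0) :
    let G : Matrix (Fin (n + 1)) (Fin (n + 1)) ℝ := Matrix.of fun k k' =>
      (if (k : ℕ) = n then (1 : ℝ) else 0) * (if (k' : ℕ) = n then (1 : ℝ) else 0)
        - a k * a k'
    let H : Matrix (Fin (n + 1)) (Fin (n + 1)) ℝ := Matrix.of fun k k' =>
      (θq q s n)⁻¹ * ξ q s n *
        ((if (k : ℕ) = n then (1 : ℝ) else 0) * ξ q s k' * a k' +
         (if (k' : ℕ) = n then (1 : ℝ) else 0) * ξ q s k * a k) -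
      ((ξ q s k)⁻¹ + (ξ q s k')⁻¹) * a k * a k'
    let J : Matrix (Fin (n + 1)) (Fin (n + 1)) ℝ := Matrix.of fun k k' =>
      (ξ q s k * ξ q s k' -
        θq q s n ^ 2 * (ξ q s n)⁻¹ ^ 2 * (ξ q s k)⁻¹ * (ξ q s k')⁻¹) * a k * a k'
    LinearIndependent ℝ ![G, H, J] := by
  intro G H J
  have hs0 : s ≠ 0 := by
    obtain ⟨m, hm, hms⟩ := hs
    rintro rfl
    have : (0 : ℝ) < m := by exact_mod_cast hm
    linarith
  rw [Fintype.linearIndependent_iff]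
  intro g hg
  have entry : ∀ k k' : Fin (n + 1), (k : ℕ) ≠ n → (k' : ℕ) ≠ n → a k ≠ 0 → a k' ≠ 0 →
      -g 0 - g 1 * ((ξ q s k)⁻¹ + (ξ q s k')⁻¹) + g 2 * (ξ q s k * ξ q s k' -
        (θq q s n ^ 2 * (ξ q s n)⁻¹ ^ 2) * (ξ q s k)⁻¹ * (ξ q s k')⁻¹) = 0 := by
    intro k k' hk hk' hak hak'
    have h := congrFun (congrFun hg k) k'
    simp only [Fin.sum_univ_three, Matrix.add_apply, Matrix.smul_apply, Matrix.zero_apply,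
      Matrix.cons_val, G, H, J, Matrix.of_apply, if_neg hk, if_neg hk', smul_eq_mul] at h
    refine (mul_eq_zero.mp ?_).resolve_right (mul_ne_zero hak hak')
    linear_combination h
  have v0 : ((0 : Fin (n + 1)) : ℕ) = 0 := rfl
  have v1 : ((1 : Fin (n + 1)) : ℕ) = 1 := by
    rw [Fin.val_one', Nat.mod_eq_of_lt (by omega)]
  have n0 : ((0 : Fin (n + 1)) : ℕ) ≠ n := by omega
  have n1 : ((1 : Fin (n + 1)) : ℕ) ≠ n := by omega
  have h00 := entry 0 0 n0 n0 ha0 ha0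
  have h01 := entry 0 1 n0 n1 ha0 ha1
  have h11 := entry 1 1 n1 n1 ha1 ha1
  rw [v0] at h00 h01
  rw [v1] at h01 h11
  obtain ⟨h0, h1, h2⟩ := coeffs_eq_zero _ _ _ _ _ _ (xi_ne_zero q s hq 0) (xi_ne_zero q s hq 1)
    (xi_zero_ne_xi_one q s hq) (theta_sq_ne q s hq hq1 hs0 n (by omega)) h00 h01 h11
  intro i
  fin_cases i
  · exact h0
  · exact h1
  · exact h2
end
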